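/- arXiv:1412.5090 — 2 statements merged into one kernel-verified Lean document; each statement's English description precedes it below -/
import Mathlib

section
/- Let S be a finite nonempty set, let L(S) be the real vector space of functions S → ℝ with pointwise addition and scalar multiplication, and let X ⊆ L(S) be a finite set of vectors all of whose coordinates are rational and satisfying X = −X (symmetry). For N ⊆ X there exists a linear functional f : L(S) → ℝ such that N = {x ∈ X : f(x) ≥ 0} if and only if: (i) for each x ∈ X, x ∈ N or −x ∈ N; and (ii) for every integer n ≥ 0 and all x_0,…,x_n ∈ N with x_0 + ⋯ + x_n = 0, one has −x_0 ∈ N. -/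
open Classical

/-- Farkas' lemma over the rationals. -/
theorem farkas_aux {V ι : Type} [AddCommGroup V] [Module ℚ V] (s : Finset ι) :
    ∀ (a : ι → V) (b : V),
      (∃ c : ι → ℚ, (∀ i, 0 ≤ c i) ∧ b = ∑ i ∈ s, c i • a i) ∨
      ∃ f : V →ₗ[ℚ] ℚ, (∀ i ∈ s, 0 ≤ f (a i)) ∧ f b < 0 := by
  induction s using Finset.induction_on with
  | empty =>
    intro a b
    by_cases hb : b = 0
    · left; exact ⟨fun _ => 0, by simp, by simp [hb]⟩
    · right
      obtain ⟨f, hf⟩ : ∃ f : V →ₗ[ℚ] ℚ, f b ≠ 0 := by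
        by_contra! h
        exact hb ((Module.forall_dual_apply_eq_zero_iff ℚ b).1 h)
      rcases lt_or_gt_of_ne hf with h | h
      · exact ⟨f, by simp, h⟩
      · exact ⟨-f, by simp, by simpa using h⟩
  | insert j s hj ih =>
    intro a b
    rcases ih a b with ⟨c, hc, hb⟩ | ⟨f, hf, hfb⟩
    · left
      refine ⟨fun i => if i = j then 0 else c i, ?_, ?_⟩
      · intro i; dsimp only; split_ifs; exacts [le_rfl, hc i]
      · rw [Finset.sum_insert hj, hb]
        simp only [if_true, zero_smul, zero_add]
        refine Finset.sum_congr rfl fun i hi => ?_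
        rw [if_neg (by rintro rfl; exact hj hi)]
    · by_cases hfj : 0 ≤ f (a j)
      · right
        refine ⟨f, ?_, hfb⟩
        intro i hi
        rcases Finset.mem_insert.1 hi with rfl | hi
        exacts [hfj, hf i hi]
      · push Not at hfj
        set t : ℚ := (f (a j))⁻¹ with ht
        have htneg : t < 0 := inv_lt_zero.2 hfj
        have htm : t * f (a j) = 1 := inv_mul_cancel₀ hfj.ne
        let π : V →ₗ[ℚ] V := LinearMap.id - (t • f).smulRight (a j)
        have hπ : ∀ v, π v = v - (t * f v) • a j := fun v => by simp [π]
        rcases ih (fun i => π (a i)) (π b) with ⟨c, hc, hb⟩ | ⟨g, hg, hgb⟩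
        · left
          refine ⟨fun i => if i = j then t * f b - ∑ i ∈ s, c i * (t * f (a i)) else c i, ?_, ?_⟩
          · intro i; dsimp only; split_ifs
            · have h1 : ∑ i ∈ s, c i * (t * f (a i)) ≤ 0 := Finset.sum_nonpos fun i hi =>
                mul_nonpos_of_nonneg_of_nonpos (hc i)
                  (mul_nonpos_of_nonpos_of_nonneg htneg.le (hf i hi))
              have h2 : 0 < t * f b := mul_pos_of_neg_of_neg htneg hfb
              linarith
            · exact hc i
          · rw [Finset.sum_insert hj]
            have h3 : ∑ i ∈ s, (if i = j then t * f b - ∑ i ∈ s, c i * (t * f (a i)) else c i) • a i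
                = ∑ i ∈ s, c i • a i := by
              refine Finset.sum_congr rfl fun i hi => ?_
              rw [if_neg (by rintro rfl; exact hj hi)]
            rw [h3]
            simp only [if_true]
            simp only [hπ, smul_sub, Finset.sum_sub_distrib, smul_smul] at hb
            rw [← Finset.sum_smul] at hb
            rw [sub_smul]
            refine (sub_eq_iff_eq_add.1 hb).trans ?_
            abel
        · right
          refine ⟨g ∘ₗ π, ?_, hgb⟩
          intro i hi
          rcases Finset.mem_insert.1 hi with rfl | hi
          · simp [hπ, htm]
          · exact hg i hi

theorem clear_denoms {ι : Type} (s : Finset ι) (c : ι → ℚ) (hc : ∀ i, 0 ≤ c i) :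
    ∃ (D : ℕ) (n : ι → ℕ), ∀ i ∈ s, (D + 1 : ℚ) * c i = n i := by
  have hpos : 0 < ∏ i ∈ s, (c i).den := Finset.prod_pos fun i _ => (c i).den_pos
  obtain ⟨D, hD⟩ := Nat.exists_eq_succ_of_ne_zero hpos.ne'
  refine ⟨D, fun i => (∏ k ∈ s.erase i, (c k).den) * (c i).num.toNat, fun i hi => ?_⟩
  have h1 : ((D : ℚ) + 1) = ((∏ i ∈ s, (c i).den : ℕ) : ℚ) := by rw [hD]; push_cast; rfl
  rw [h1, ← Finset.prod_erase_mul s _ hi, Nat.cast_mul, Nat.cast_mul, mul_assoc]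
  congr 1
  have h2 : (((c i).num.toNat : ℕ) : ℚ) = ((c i).num : ℚ) := by
    have := Int.toNat_of_nonneg (Rat.num_nonneg.2 (hc i))
    exact_mod_cast this
  rw [h2, mul_comm, Rat.mul_den_eq_num]

/-- Scott's separation theorem: for a finite, rational, symmetric set `X` of vectors in
`L(S)` and `N ⊆ X`, there is a linear functional realizing `N` iff the two stated
conditions hold. -/
theorem scott_separation {S : Type} [Finite S] [Nonempty S]
    (X : Set (S → ℝ)) (hfin : X.Finite)
    (hrat : ∀ x ∈ X, ∀ s : S, ∃ q : ℚ, x s = (q : ℝ))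
    (hsym : X = -X)
    (N : Set (S → ℝ)) (hN : N ⊆ X) :
    (∃ f : (S → ℝ) →ₗ[ℝ] ℝ, N = {x ∈ X | 0 ≤ f x}) ↔
    ((∀ x ∈ X, x ∈ N ∨ -x ∈ N) ∧
     (∀ n : ℕ, ∀ x : Fin (n + 1) → (S → ℝ),
       (∀ i, x i ∈ N) → (∑ i, x i) = 0 → -(x 0) ∈ N)) := by
  have hneg : ∀ x ∈ X, -x ∈ X := fun x hx => by
    rw [hsym]; simpa using hx
  constructor
  · rintro ⟨f, hf⟩
    have hmem : ∀ x, x ∈ N ↔ x ∈ X ∧ 0 ≤ f x := fun x => by rw [hf]; rfl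
    constructor
    · intro x hx
      rw [hmem, hmem, map_neg]
      rcases le_total 0 (f x) with h | h
      · exact Or.inl ⟨hx, h⟩
      · exact Or.inr ⟨hneg x hx, by linarith⟩
    · intro n x hx hsum
      have h1 : ∑ i, f (x i) = 0 := by rw [← map_sum, hsum, map_zero]
      have h2 := (Finset.sum_eq_zero_iff_of_nonneg
        (fun i _ => ((hmem _).1 (hx i)).2)).1 h1 0 (Finset.mem_univ _)
      rw [hmem, map_neg, h2]
      exact ⟨hneg _ (hN (hx 0)), by simp⟩
  · rintro ⟨h1, h2⟩
    have := Fintype.ofFinite S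
    have h2' : ∀ x ∈ N, -x ∈ AddSubmonoid.closure N → -x ∈ N := by
      intro x hx hcl
      obtain ⟨l, hl, hsum⟩ := AddSubmonoid.exists_list_of_mem_closure hcl
      refine h2 l.length (fun i => (x :: l).get i) ?_ ?_
      · intro i
        have := List.get_mem (x :: l) i
        rcases List.mem_cons.1 this with h | h
        · rw [h]; exact hx
        · exact hl _ h
      · have h3 : ∑ i, (x :: l).get i = (x :: l).sum := by
          rw [← List.sum_ofFn, List.ofFn_get]
        refine h3.trans ?_
        rw [List.sum_cons, hsum, add_neg_cancel]
    let φ : (S → ℚ) → (S → ℝ) := fun v s => (v s : ℝ)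
    have hφinj : Function.Injective φ := fun v w h => by
      funext s
      have h3 : (v s : ℝ) = (w s : ℝ) := congrFun h s
      exact_mod_cast h3
    have hNfin : (φ ⁻¹' N).Finite := (hfin.subset hN).preimage hφinj.injOn
    have hsurj : ∀ x ∈ X, ∃ v, φ v = x := fun x hx => by
      choose q hq using hrat x hx
      exact ⟨q, funext fun s => (hq s).symm⟩
    have hφneg : ∀ v, φ (-v) = - φ v := fun v => by funext s; simp [φ]
    have key : ∀ v : S → ℚ, ∃ f : (S → ℚ) →ₗ[ℚ] ℚ, (∀ w, φ w ∈ N → 0 ≤ f w) ∧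
        (φ v ∈ N → -φ v ∉ N → 0 < f v) := by
      intro v
      by_cases hv : φ v ∈ N ∧ -φ v ∉ N
      · obtain ⟨hv1, hv2⟩ := hv
        rcases farkas_aux hNfin.toFinset id (-v) with ⟨c, hc, hb⟩ | ⟨f, hf, hfb⟩
        · exfalso
          apply hv2
          apply h2' _ hv1
          obtain ⟨D, n, hDn⟩ := clear_denoms hNfin.toFinset c hc
          have heq : -φ v = D • φ v + ∑ w ∈ hNfin.toFinset, n w • φ w := by
            funext s
            have hs := congrFun hb s
            simp only [Pi.neg_apply, Finset.sum_apply, Pi.smul_apply, smul_eq_mul, id] at hs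
            have h4 : ∑ w ∈ hNfin.toFinset, (n w : ℚ) * w s = (D + 1) * (-v s) := by
              rw [hs, Finset.mul_sum]
              refine Finset.sum_congr rfl fun w hw => ?_
              rw [← hDn w hw]; ring
            have h5 : ∑ w ∈ hNfin.toFinset, (n w : ℝ) * (w s : ℝ) = (D + 1) * (-(v s : ℝ)) := by
              exact_mod_cast h4
            simp only [Pi.neg_apply, Pi.add_apply, Finset.sum_apply, Pi.smul_apply, φ]
            simp only [nsmul_eq_mul]
            rw [h5]; ring
          rw [heq]
          refine add_mem (nsmul_mem (AddSubmonoid.subset_closure hv1) _)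
            (sum_mem fun w hw => nsmul_mem (AddSubmonoid.subset_closure ?_) _)
          simpa using hw
        · refine ⟨f, fun w hw => hf w (by simpa using hw), fun _ _ => ?_⟩
          simpa using hfb
      · exact ⟨0, by simp, fun a b => absurd ⟨a, b⟩ hv⟩
    choose f hf0 hf1 using key
    let g : (S → ℚ) →ₗ[ℚ] ℚ := ∑ v ∈ hNfin.toFinset, f v
    have hg0 : ∀ w, φ w ∈ N → 0 ≤ g w := fun w hw => by
      simp only [g, LinearMap.sum_apply]
      exact Finset.sum_nonneg fun v _ => hf0 v w hw
    have hg1 : ∀ w, φ w ∈ N → -φ w ∉ N → 0 < g w := fun w hw hw' => by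
      simp only [g, LinearMap.sum_apply]
      exact Finset.sum_pos' (fun v _ => hf0 v w hw) ⟨w, by simpa using hw, hf1 w hw hw'⟩
    let F : (S → ℝ) →ₗ[ℝ] ℝ := ∑ s, ((g (Pi.single s 1) : ℚ) : ℝ) • LinearMap.proj s
    have hF : ∀ v, F (φ v) = (g v : ℝ) := fun v => by
      have : g v = ∑ s, g (Pi.single s 1) * v s := by
        conv_lhs => rw [LinearMap.pi_apply_eq_sum_univ g v]
        refine Finset.sum_congr rfl fun s _ => ?_
        rw [smul_eq_mul, mul_comm]
        congr 2
        funext i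
        simp [Pi.single_apply, eq_comm]
      rw [this]
      simp [F, φ, LinearMap.sum_apply]
    refine ⟨F, Set.ext fun x => ⟨fun hx => ⟨hN hx, ?_⟩, fun ⟨hx, hFx⟩ => ?_⟩⟩
    · obtain ⟨v, rfl⟩ := hsurj x (hN hx)
      rw [hF]; exact_mod_cast hg0 v hx
    · by_contra hxN
      obtain ⟨v, rfl⟩ := hsurj x hx
      have h3 := (h1 _ hx).resolve_left hxN
      have h4 := hg1 (-v) (by rwa [hφneg]) (by rwa [hφneg, neg_neg])
      rw [hF] at hFx
      have h5 : 0 ≤ g v := by exact_mod_cast hFx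
      rw [map_neg] at h4
      linarith
end

section
/- Let M = (W,R,V,P) be an epistemic probability model and define N^{1/2}(w) := {X ⊆ [w] : P_w(X) > 1/2} for each w ∈ W. Then (W,R,V,N^{1/2}) is a mid-threshold epistemic neighborhood model; that is, in addition to (kbc), (kbf), (n), (a), (kbm), the function N^{1/2} satisfies (d), (sc), and (scott). -/
open Classical

/-- An epistemic probability model: finite nonempty world set, S5 (equivalence)
accessibility relation, valuation, and a finitely additive probability measure
with full support. -/
structure EPM (W A : Type) where
  finite : Finite W
  nonempty : Nonempty W
  R : W → W → Prop
  equiv : Equivalence R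
  V : W → Set A
  P : Set W → ℝ
  nonneg : ∀ X : Set W, 0 ≤ P X
  le_one : ∀ X : Set W, P X ≤ 1
  norm : P Set.univ = 1
  add : ∀ X Y : Set W, X ∩ Y = ∅ → P (X ∪ Y) = P X + P Y
  full : ∀ w : W, 0 < P {w}

/-- The equivalence class `[w]` of a world. -/
def EPM.cl {W A : Type} (M : EPM W A) (w : W) : Set W := {v | M.R w v}

/-- `P_w(X) := P(X ∩ [w]) / P([w])`. -/
noncomputable def EPM.Pw {W A : Type} (M : EPM W A) (w : W) (X : Set W) : ℝ :=
  M.P (X ∩ M.cl w) / M.P (M.cl w)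

/-- An epistemic neighborhood model. -/
structure ENM (W A : Type) where
  finite : Finite W
  nonempty : Nonempty W
  R : W → W → Prop
  equiv : Equivalence R
  V : W → Set A
  N : W → Set (Set W)
  kbc : ∀ w : W, ∀ X ∈ N w, X ⊆ {v | R w v}
  kbf : ∀ w : W, ∅ ∉ N w
  contains_class : ∀ w : W, {v | R w v} ∈ N w
  agreeN : ∀ w v : W, R w v → N v = N w
  kbm : ∀ w : W, ∀ X ∈ N w, ∀ Y : Set W, X ⊆ Y → Y ⊆ {v | R w v} → Y ∈ N w

/-- The equivalence class `[w]` of a world. -/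
def ENM.cl {W A : Type} (M : ENM W A) (w : W) : Set W := {v | M.R w v}

/-- A mid-threshold epistemic neighborhood model: an epistemic neighborhood model
additionally satisfying (d), (sc) and (scott). -/
structure MidENM (W A : Type) extends ENM W A where
  d : ∀ w : W, ∀ X ∈ N w, {v | R w v} \ X ∉ N w
  sc : ∀ w : W, ∀ X Y : Set W, X ⊆ {v | R w v} → Y ⊆ {v | R w v} →
      {v | R w v} \ X ∉ N w → X ⊂ Y → Y ∈ N w
  scott : ∀ w : W, ∀ m : ℕ, ∀ X Y : Fin (m + 1) → Set W,
      (∀ i, X i ⊆ {v | R w v}) → (∀ i, Y i ⊆ {v | R w v}) →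
      (∀ v : W, (Finset.univ.filter (fun i => v ∈ X i)).card ≤
                (Finset.univ.filter (fun i => v ∈ Y i)).card) →
      X 0 ∈ N w →
      (∀ i : Fin (m + 1), i ≠ 0 → {v | R w v} \ X i ∉ N w) →
      ∃ j : Fin (m + 1), Y j ∈ N w

theorem EPM.P_empty {W A : Type} (M : EPM W A) : M.P ∅ = 0 := by
  have := M.add ∅ ∅ (by simp)
  simp at this
  exact this

theorem EPM.P_sum {W A : Type} (M : EPM W A) [Fintype W] (X : Set W) :
    M.P X = ∑ v : W, if v ∈ X then M.P {v} else 0 := by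
  have key : ∀ s : Finset W, M.P (s : Set W) = ∑ v ∈ s, M.P {v} := by
    intro s
    induction s using Finset.induction_on with
    | empty => simpa using M.P_empty
    | insert a s ha ih =>
      rw [Finset.sum_insert ha, Finset.coe_insert, Set.insert_eq, M.add, ih]
      ext x
      simp only [Set.mem_inter_iff, Set.mem_singleton_iff, Finset.mem_coe,
        Set.mem_empty_iff_false, iff_false, not_and]
      rintro rfl
      exact ha
  have h := key (Finset.univ.filter (fun v => v ∈ X))
  rw [Finset.sum_filter] at h
  rw [← h]
  congr 1
  ext x
  simp

theorem EPM.P_diff {W A : Type} (M : EPM W A) {X Y : Set W} (h : X ⊆ Y) :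
    M.P Y = M.P X + M.P (Y \ X) := by
  rw [← M.add X (Y \ X) (by simp), Set.union_diff_cancel h]

theorem EPM.P_mono {W A : Type} (M : EPM W A) {X Y : Set W} (h : X ⊆ Y) :
    M.P X ≤ M.P Y := by
  have := M.P_diff h
  have := M.nonneg (Y \ X)
  linarith

theorem EPM.P_pos {W A : Type} (M : EPM W A) {X : Set W} {w : W} (h : w ∈ X) :
    0 < M.P X :=
  lt_of_lt_of_le (M.full w) (M.P_mono (Set.singleton_subset_iff.2 h))

theorem EPM.cl_pos {W A : Type} (M : EPM W A) (w : W) : 0 < M.P (M.cl w) :=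
  M.P_pos (w := w) (M.equiv.refl w)

theorem EPM.half_iff {W A : Type} (M : EPM W A) (w : W) (X : Set W) (h : X ⊆ M.cl w) :
    (1/2 : ℝ) < M.Pw w X ↔ M.P (M.cl w) < 2 * M.P X := by
  unfold EPM.Pw
  rw [Set.inter_eq_left.2 h, lt_div_iff₀ (M.cl_pos w)]
  constructor <;> intro h <;> linarith

theorem EPM.diff_notin {W A : Type} (M : EPM W A) (w : W) (X : Set W) (h : X ⊆ M.cl w)
    (hn : ¬ (M.cl w \ X ⊆ M.cl w ∧ (1/2 : ℝ) < M.Pw w (M.cl w \ X))) :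
    M.P (M.cl w) ≤ 2 * M.P X := by
  have h1 := M.P_diff h
  by_contra hc
  refine hn ⟨Set.diff_subset, (M.half_iff w _ Set.diff_subset).2 ?_⟩
  linarith

theorem EPM.sum_P {W A : Type} (M : EPM W A) [Fintype W] {n : ℕ} (X : Fin n → Set W) :
    ∑ i, M.P (X i) =
      ∑ v : W, ((Finset.univ.filter (fun i => v ∈ X i)).card : ℝ) * M.P {v} := by
  simp_rw [M.P_sum (X _)]
  rw [Finset.sum_comm]
  refine Finset.sum_congr rfl fun v _ => ?_
  rw [← Finset.sum_filter, Finset.sum_const, nsmul_eq_mul]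

/-- The neighborhood function `N^{1/2}(w) = {X ⊆ [w] : P_w(X) > 1/2}` derived from an
epistemic probability model yields a mid-threshold epistemic neighborhood model. -/
theorem derived_midthreshold_model {W A : Type} (M : EPM W A) :
    ∃ M' : MidENM W A, M'.R = M.R ∧ M'.V = M.V ∧
      ∀ w : W, M'.N w = {X : Set W | X ⊆ M.cl w ∧ (1/2 : ℝ) < M.Pw w X} := by
  refine ⟨{ finite := M.finite, nonempty := M.nonempty, R := M.R, equiv := M.equiv, V := M.V,
            N := fun w => {X : Set W | X ⊆ M.cl w ∧ (1/2 : ℝ) < M.Pw w X},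
            kbc := ?_, kbf := ?_, contains_class := ?_, agreeN := ?_, kbm := ?_,
            d := ?_, sc := ?_, scott := ?_ }, rfl, rfl, fun w => rfl⟩
  · intro w X hX
    exact hX.1
  · intro w hX
    have h1 := (M.half_iff w _ hX.1).1 hX.2
    have h2 := M.cl_pos w
    rw [M.P_empty] at h1
    linarith
  · intro w
    have h2 := M.cl_pos w
    refine ⟨subset_rfl, (M.half_iff w _ subset_rfl).2 ?_⟩
    change M.P (M.cl w) < 2 * M.P (M.cl w)
    linarith
  · intro w v hwv
    have hc : M.cl v = M.cl w := by
      ext x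
      exact ⟨fun h => M.equiv.trans hwv h, fun h => M.equiv.trans (M.equiv.symm hwv) h⟩
    simp only [EPM.Pw, hc]
  · intro w X hX Y hXY hY
    have h1 := (M.half_iff w _ hX.1).1 hX.2
    have h2 := M.P_mono hXY
    exact ⟨hY, (M.half_iff w _ hY).2 (by linarith)⟩
  · intro w X hX hX'
    have h1 := (M.half_iff w _ hX.1).1 hX.2
    have h2 := (M.half_iff w _ hX'.1).1 hX'.2
    have h3 := M.P_diff hX.1
    change M.P (M.cl w) < 2 * M.P (M.cl w \ X) at h2
    linarith
  · intro w X Y hX hY hn hXY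
    have h1 := M.diff_notin w X hX hn
    obtain ⟨x, hxY, hxX⟩ := Set.exists_of_ssubset hXY
    have h2 := M.P_diff hXY.subset
    have h3 : 0 < M.P (Y \ X) := M.P_pos (w := x) ⟨hxY, hxX⟩
    exact ⟨hY, (M.half_iff w _ hY).2 (by linarith)⟩
  · intro w m X Y hX hY hcard h0 hn
    haveI := M.finite
    letI := Fintype.ofFinite W
    by_contra hc
    have hYle : ∀ j, 2 * M.P (Y j) ≤ M.P (M.cl w) := by
      intro j
      by_contra hj
      exact hc ⟨j, hY j, (M.half_iff w _ (hY j)).2 (lt_of_not_ge hj)⟩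
    have hX0 := (M.half_iff w _ h0.1).1 h0.2
    have hXge : ∀ i, M.P (M.cl w) ≤ 2 * M.P (X i) := by
      intro i
      by_cases hi : i = 0
      · rw [hi]
        exact hX0.le
      · exact M.diff_notin w (X i) (hX i) (hn i hi)
    have hle : ∑ i, M.P (X i) ≤ ∑ i, M.P (Y i) := by
      rw [M.sum_P, M.sum_P]
      refine Finset.sum_le_sum fun v _ => ?_
      exact mul_le_mul_of_nonneg_right (by exact_mod_cast hcard v) (M.nonneg _)
    have hlt : ∑ i, M.P (Y i) < ∑ i, M.P (X i) := by
      refine Finset.sum_lt_sum (fun i _ => ?_) ⟨0, Finset.mem_univ _, ?_⟩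
      · linarith [hYle i, hXge i]
      · linarith [hYle 0]
    exact absurd hle (not_le.2 hlt)
end
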